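/- Identify the Euclidean plane with ℂ and let A = 0, B = b₀·exp(i·β₀), C = 1, where b₀ > 0 and sin β₀ ≠ 0 (so A, B, C form a nondegenerate triangle). Let m ∈ ℝ with m ≠ 0 and μ₀ ∈ ℝ, and suppose M_A = m·exp(i·μ₀) is the Miquel–Steiner point of a cevian pair (B_A, C_A) from A with cevian intersection point N_A (in particular M_A does not lie on the circumcircle of ABC nor on lines AB, AC, so sin μ₀ ≠ 0 and sin(μ₀ − β₀) ≠ 0). Then N_A = 1 + b₀·exp(i·β₀) − (b₀/m)·exp(i·(β₀ − μ₀)). Consequently, as M_A varies over the punctured line {m·exp(i·μ₀) : m ∈ ℝ, m ≠ 0} through A, the point N_A stays on the fixed line through 1 + b₀·exp(i·β₀) with direction exp(i·(β₀ − μ₀)), which is parallel to the isogonal of that line with respect to the angle of the triangle at A. -/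

import Mathlib

/-!
With `A = 0` and `C = 1`, write `B_A = s` and `C_A = t B` with `s, t` real, and let `M = x + y B`
with `x, y` real. A circle through `0` has the form `|z|² = L z` with `L` real-linear, and the values
of `L` at two further points determine it. The circles `A B B_A` and `A C C_A` therefore give
`|M|² = x s + y |B|²` and `|M|² = x + y t |B|²` (`normSq_eq_of_cospherical`).

Writing the point `N = B + p (s - B) = 1 + q (t B - 1)` on both cevians and comparing coordinates in
the real basis `1, B` gives `p s + q = 1` and `p + q t = 1`. This linear system in `(p, q)` is
nonsingular, and by the circle equations it is solved by `p = x / |M|²`, `q = y |B|² / |M|²`. Hence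
`q + p B = B * conj M / |M|² = B / M` (`mul_eq_of_circles`), so `N = 1 + B - (q + p B) = 1 + B - B / M`.
-/

open EuclideanGeometry

/-- `(B_A, C_A)` is a cevian pair from `A` in triangle `ABC` in the complex plane. -/
def IsCevianPairC (A B C B_A C_A : ℂ) : Prop :=
  B_A ∈ line[ℝ, A, C] ∧ B_A ≠ A ∧ B_A ≠ C ∧
  C_A ∈ line[ℝ, A, B] ∧ C_A ≠ A ∧ C_A ≠ B ∧
  ¬ AffineSubspace.Parallel (line[ℝ, B, B_A]) (line[ℝ, C, C_A])

/-- `M` is a Miquel–Steiner point of the cevian pair `(B_A, C_A)` from `A` with cevian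
intersection point `N_A`, in the complex plane. -/
def IsMiquelPointC (A B C B_A C_A N_A M : ℂ) : Prop :=
  Cospherical ({A, B, B_A, M} : Set ℂ) ∧ Cospherical ({A, C, C_A, M} : Set ℂ) ∧
  Cospherical ({C, B_A, N_A, M} : Set ℂ) ∧ Cospherical ({B, C_A, N_A, M} : Set ℂ)

/-- The equation at `M = x Q + y P` of the circle through `0`, `P` and `r Q`. -/
lemma normSq_eq_of_cospherical {P Q M : ℂ} {r x y : ℝ} (hr : r ≠ 0) (hM : M = x * Q + y * P)
    (h : Cospherical ({0, P, r * Q, M} : Set ℂ)) :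
    Complex.normSq M = x * r * Complex.normSq Q + y * Complex.normSq P := by
  obtain ⟨c, R, hc⟩ := h
  have key : ∀ z ∈ ({0, P, r * Q, M} : Set ℂ),
      (z.re - c.re) ^ 2 + (z.im - c.im) ^ 2 = R ^ 2 := by
    intro z hz
    rw [← hc z hz, Complex.dist_eq, ← Complex.normSq_eq_norm_sq, Complex.normSq_apply]
    simp only [Complex.sub_re, Complex.sub_im]
    ring
  have h0 := key 0 (by simp)
  have hP := key P (by simp)
  have hQ := key (r * Q) (by simp)
  have hM' := key M (by simp)
  have hre : M.re = x * Q.re + y * P.re := by simp [hM]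
  have him : M.im = x * Q.im + y * P.im := by simp [hM]
  simp only [Complex.zero_re, Complex.zero_im, Complex.re_ofReal_mul, Complex.im_ofReal_mul]
    at h0 hQ
  -- dividing the equation at `r Q` by `r` gives the value of the linear form at `Q`
  have hQ' : r * (Q.re ^ 2 + Q.im ^ 2) = 2 * (Q.re * c.re + Q.im * c.im) := by
    apply mul_left_cancel₀ hr
    linear_combination hQ - h0
  simp only [Complex.normSq_apply]
  linear_combination hM' - h0 - y * (hP - h0) - x * hQ' + 2 * c.re * hre + 2 * c.im * him

/-- The identity `q + p B = B / M`, cleared of denominators. The hypotheses are the two circle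
equations at `M` and the two coordinate equations for the intersection of the cevians. -/
lemma mul_eq_of_circles {B M : ℂ} {s t p q x y : ℝ} (hM : M = x + y * B) (hM0 : M ≠ 0)
    (h₁ : Complex.normSq M = x * s + y * Complex.normSq B)
    (h₂ : Complex.normSq M = x + y * t * Complex.normSq B)
    (hp : p * s + q = 1) (hq : p + q * t = 1) (hst : s * t - 1 ≠ 0) :
    (q + p * B) * M = B := by
  have hpn : p * Complex.normSq M = x := by
    apply mul_left_cancel₀ hst
    linear_combination Complex.normSq M * (t * hp - hq) + t * h₁ - h₂
  have hqn : q * Complex.normSq M = y * Complex.normSq B := by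
    linear_combination Complex.normSq M * hp + h₁ - s * hpn
  have hconj : (starRingEnd ℂ) M = x + y * (starRingEnd ℂ) B := by simp [hM]
  have hn : (Complex.normSq M : ℂ) ≠ 0 := by simpa using hM0
  have hpn' : (p : ℂ) * Complex.normSq M = x := by exact_mod_cast hpn
  have hqn' : (q : ℂ) * Complex.normSq M = y * Complex.normSq B := by exact_mod_cast hqn
  apply mul_right_cancel₀ hn
  have e₁ := Complex.mul_conj M
  have e₂ := Complex.mul_conj B
  rw [hconj] at e₁
  linear_combination M * hqn' + M * B * hpn' + B * e₁ - M * y * e₂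

/-- If `A = 0`, `B = b₀·exp(i β₀)`, `C = 1` and the Miquel–Steiner point of a cevian
pair from `A` is `M_A = m·exp(i μ₀)` with `m ≠ 0`, `sin μ₀ ≠ 0`, `sin (μ₀ - β₀) ≠ 0`,
then the cevian intersection point is
`N_A = 1 + b₀·exp(i β₀) - (b₀/m)·exp(i (β₀ - μ₀))`; consequently, as `M_A` varies over
the punctured line through `A` with direction `exp(i μ₀)`, the point `N_A` stays on
the fixed line through `1 + b₀·exp(i β₀)` with direction `exp(i (β₀ - μ₀))` (parallel
to the isogonal of that line at `A`). -/
theorem cevian_intersection_on_line_parallel_isogonal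
    (b₀ β₀ m μ₀ : ℝ) (hb₀ : 0 < b₀) (hβ : Real.sin β₀ ≠ 0) (hm : m ≠ 0)
    (hμ : Real.sin μ₀ ≠ 0) (hμβ : Real.sin (μ₀ - β₀) ≠ 0)
    (A B C B_A C_A N_A M_A : ℂ)
    (hA : A = 0) (hB : B = (b₀ : ℂ) * Complex.exp (β₀ * Complex.I)) (hC : C = 1)
    (hMA : M_A = (m : ℂ) * Complex.exp (μ₀ * Complex.I))
    (hcev : IsCevianPairC A B C B_A C_A)
    (hN₁ : N_A ∈ line[ℝ, B, B_A]) (hN₂ : N_A ∈ line[ℝ, C, C_A])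
    (hCBN : AffineIndependent ℝ ![C, B_A, N_A])
    (hBCN : AffineIndependent ℝ ![B, C_A, N_A])
    (hM : IsMiquelPointC A B C B_A C_A N_A M_A) :
    N_A = 1 + (b₀ : ℂ) * Complex.exp (β₀ * Complex.I) -
        ((b₀ : ℂ) / (m : ℂ)) * Complex.exp ((β₀ - μ₀ : ℝ) * Complex.I) ∧
      ∃ n : ℝ, N_A = 1 + (b₀ : ℂ) * Complex.exp (β₀ * Complex.I) +
        (n : ℂ) * Complex.exp ((β₀ - μ₀ : ℝ) * Complex.I) := by
  have hval : N_A = 1 + (b₀ : ℂ) * Complex.exp (β₀ * Complex.I) -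
      ((b₀ : ℂ) / (m : ℂ)) * Complex.exp ((β₀ - μ₀ : ℝ) * Complex.I) := by
    have hmC : (m : ℂ) ≠ 0 := by exact_mod_cast hm
    have hM0 : M_A ≠ 0 := by
      rw [hMA]
      exact mul_ne_zero hmC (Complex.exp_ne_zero _)
    have hquot : ((b₀ : ℂ) / (m : ℂ)) * Complex.exp ((β₀ - μ₀ : ℝ) * Complex.I) = B / M_A := by
      rw [hB, hMA]
      push_cast
      rw [sub_mul, Complex.exp_sub, div_mul_div_comm]
    have hBim : B.im ≠ 0 := by
      rw [hB, Complex.im_ofReal_mul, Complex.exp_ofReal_mul_I_im]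
      exact mul_ne_zero hb₀.ne' hβ
    rw [hquot, ← hB]
    clear hquot hB hMA
    subst hA hC
    obtain ⟨hBA, hBA0, -, hCA, hCA0, hCAB, -⟩ := hcev
    obtain ⟨s, rfl⟩ := mem_affineSpan_pair_iff_exists_lineMap_eq.1 hBA
    obtain ⟨t, rfl⟩ := mem_affineSpan_pair_iff_exists_lineMap_eq.1 hCA
    obtain ⟨p, hp⟩ := mem_affineSpan_pair_iff_exists_lineMap_eq.1 hN₁
    obtain ⟨q, hq⟩ := mem_affineSpan_pair_iff_exists_lineMap_eq.1 hN₂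
    obtain ⟨hc₁, hc₂, -, -⟩ := hM
    simp only [AffineMap.lineMap_apply, vsub_eq_sub, vadd_eq_add, sub_zero, add_zero,
      Complex.real_smul, mul_one] at hBA0 hCA0 hCAB hp hq hc₁ hc₂
    have hs0 : s ≠ 0 := by
      rintro rfl
      simp at hBA0
    have ht0 : t ≠ 0 := by
      rintro rfl
      simp at hCA0
    have ht1 : t ≠ 1 := by
      rintro rfl
      simp at hCAB
    -- coordinates of `N_A` in the basis `1, B`, computed along each cevian
    have hN := hp.trans hq.symm
    have him := congrArg Complex.im hN
    have hre := congrArg Complex.re hN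
    simp at him hre
    have hq1 : p + q * t = 1 := by
      apply mul_right_cancel₀ hBim
      linear_combination -him
    have hp1 : p * s + q = 1 := by
      linear_combination hre + B.re * hq1
    -- `s t = 1` would force `t = 1`, that is `C_A = B`
    have hst : s * t - 1 ≠ 0 := by
      intro h
      apply ht1
      linear_combination p * h - t * hp1 + hq1
    obtain ⟨x, y, hxy⟩ : ∃ x y : ℝ, M_A = x + y * B := by
      refine ⟨M_A.re - M_A.im / B.im * B.re, M_A.im / B.im, ?_⟩
      apply Complex.ext
      · simp
      · simp [hBim]
    have h₁ := normSq_eq_of_cospherical (M := M_A) (P := B) (Q := 1) (x := x) (y := y) hs0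
      (by rw [hxy]; ring) (by simpa using hc₁)
    have h₂ := normSq_eq_of_cospherical (M := M_A) (P := 1) (Q := B) (x := y) (y := x) ht0
      (by rw [hxy]; ring) hc₂
    simp only [map_one, mul_one] at h₁ h₂
    have key := mul_eq_of_circles hxy hM0 h₁ (h₂.trans (add_comm _ _)) hp1 hq1 hst
    have hdiv : (q : ℂ) + p * B = B / M_A := by
      rw [eq_div_iff hM0, key]
    have hp1' : (p : ℂ) * s + q = 1 := by exact_mod_cast hp1
    linear_combination -hp - hdiv + hp1'
  refine ⟨hval, -(b₀ / m), ?_⟩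
  rw [hval]
  push_cast
  ring
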